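/- arXiv:2508.17491 — 2 statements merged into one kernel-verified Lean document; each statement's English description precedes it below -/
import Mathlib

section
/- For all positive integers n and all nonnegative integers k, the number of partitions of n with nonnegative crank and exactly k parts that are not equal to 1 is equal to the number of partitions of n with odd mex and exactly k parts that are not equal to 1. -/
/-- The number of parts equal to 1 in the partition `π`. -/
def partitionOmega {n : ℕ} (π : n.Partition) : ℕ := π.parts.count 1

/-- The number of parts of `π` strictly greater than the number of ones in `π`. -/
def partitionEta {n : ℕ} (π : n.Partition) : ℕ :=
  (π.parts.filter (fun p => partitionOmega π < p)).card

/-- The crank of a partition: the largest part if there are no ones,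
and `η(π) - ω(π)` otherwise. -/
def partitionCrank {n : ℕ} (π : n.Partition) : ℤ :=
  if partitionOmega π = 0 then (π.parts.sup : ℤ)
  else (partitionEta π : ℤ) - (partitionOmega π : ℤ)

/-- The mex of a partition: the least positive integer not occurring as a part. -/
noncomputable def partitionMex {n : ℕ} (π : n.Partition) : ℕ :=
  sInf {k : ℕ | 0 < k ∧ k ∉ π.parts}

/-- The number of parts of `π` that are not equal to 1, counted with multiplicity. -/
def nonOneParts {n : ℕ} (π : n.Partition) : ℕ :=
  (π.parts.filter (fun p => p ≠ 1)).card

/-- The number of consecutive integers `d, d + 1, d + 2, …` occurring in `s`. -/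
noncomputable def runLength (d : ℕ) (s : Multiset ℕ) : ℕ :=
  sInf {t : ℕ | d + t ∉ s}

theorem runLength_set_nonempty (d : ℕ) (s : Multiset ℕ) : {t : ℕ | d + t ∉ s}.Nonempty := by
  refine ⟨s.sum + 1, fun h => ?_⟩
  have := Multiset.single_le_sum (fun x _ => Nat.zero_le x) _ h
  omega

theorem runLength_of_notMem {d : ℕ} {s : Multiset ℕ} (h : d ∉ s) : runLength d s = 0 :=
  Nat.sInf_eq_zero.2 (Or.inl (by simpa using h))

theorem runLength_of_mem {d : ℕ} {s : Multiset ℕ} (h : d ∈ s) :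
    runLength d s = runLength (d + 1) s + 1 := by
  have h1 : 1 ≤ sInf {t : ℕ | d + t ∉ s} := by
    rw [Nat.one_le_iff_ne_zero, Ne, Nat.sInf_eq_zero]
    rintro (h0 | h0)
    · exact h0 (by simpa using h)
    · exact (runLength_set_nonempty d s).ne_empty h0
  have h2 := Nat.sInf_add (p := fun t => d + t ∉ s) h1
  rw [runLength, runLength, ← h2]
  simp only [add_assoc, add_comm 1]

theorem odd_runLength_iff (d : ℕ) (s : Multiset ℕ) :
    Odd (runLength d s) ↔ d ∈ s ∧ ¬ Odd (runLength (d + 1) s) := by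
  by_cases h : d ∈ s
  · rw [runLength_of_mem h, Nat.odd_add_one]
    simp [h]
  · rw [runLength_of_notMem h]
    simp [h]

theorem runLength_congr {d : ℕ} {s t : Multiset ℕ} (h : ∀ p, d ≤ p → (p ∈ s ↔ p ∈ t)) :
    runLength d s = runLength d t := by
  unfold runLength
  congr 1
  ext u
  exact not_congr (h _ (Nat.le_add_right _ _))

theorem partitionMex_eq_runLength {n : ℕ} (π : n.Partition) :
    partitionMex π = runLength 1 π.parts + 1 := by
  have hne : {k : ℕ | 0 < k ∧ k ∉ π.parts}.Nonempty := by
    obtain ⟨t, ht⟩ := runLength_set_nonempty 1 π.parts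
    exact ⟨1 + t, by omega, ht⟩
  have h1 : 1 ≤ sInf {k : ℕ | 0 < k ∧ k ∉ π.parts} := (Nat.sInf_mem hne).1
  have h2 := Nat.sInf_add (p := fun k => 0 < k ∧ k ∉ π.parts) h1
  rw [partitionMex, ← h2, runLength]
  simp [add_comm 1]

/-- Pairs `(s, i)` encoding the partition of `n` with `i` ones and with `s` as its multiset of
`k` remaining parts. -/
def onesPairs (n k : ℕ) : Set (Multiset ℕ × ℕ) :=
  {x | (∀ p ∈ x.1, 2 ≤ p) ∧ x.1.sum + x.2 = n ∧ x.1.card = k}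

/-- Pairs with `i ≥ 1` ones and at least `i` parts that are at least `i + 1 + d`. -/
def crankPairs (d n k : ℕ) : Set (Multiset ℕ × ℕ) :=
  {x | x ∈ onesPairs n k ∧ 1 ≤ x.2 ∧ x.2 ≤ (x.1.filter (x.2 + 1 + d ≤ ·)).card}

/-- Pairs with at least one `1` and an odd run of consecutive parts starting from `d + 2`. -/
def mexPairs (d n k : ℕ) : Set (Multiset ℕ × ℕ) :=
  {x | x ∈ onesPairs n k ∧ 1 ≤ x.2 ∧ Odd (runLength (d + 2) x.1)}

/-- The multiset of all parts encoded by a pair. -/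
def pairParts (x : Multiset ℕ × ℕ) : Multiset ℕ :=
  x.1 + Multiset.replicate x.2 1

theorem filter_pairParts {x : Multiset ℕ × ℕ} (hx : ∀ p ∈ x.1, 2 ≤ p) :
    (pairParts x).filter (· ≠ 1) = x.1 := by
  rw [pairParts, Multiset.filter_add, Multiset.filter_eq_self.2, Multiset.filter_eq_nil.2, add_zero]
  · intro a ha
    simp [Multiset.eq_of_mem_replicate ha]
  · intro a ha
    have := hx a ha
    omega

theorem count_pairParts {x : Multiset ℕ × ℕ} (hx : ∀ p ∈ x.1, 2 ≤ p) :
    (pairParts x).count 1 = x.2 := by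
  rw [pairParts, Multiset.count_add, Multiset.count_eq_zero_of_notMem, zero_add,
    Multiset.count_replicate_self]
  intro h
  have := hx 1 h
  omega

theorem pairParts_filter_count (s : Multiset ℕ) :
    pairParts (s.filter (· ≠ 1), s.count 1) = s := by
  rw [pairParts, ← Multiset.filter_eq', add_comm]
  exact Multiset.filter_add_not _ s

/-- The partition encoded by a pair. -/
def pairPartition {n k : ℕ} (x : Multiset ℕ × ℕ) (hx : x ∈ onesPairs n k) : n.Partition where
  parts := pairParts x
  parts_pos := by
    intro p hp
    rcases Multiset.mem_add.1 hp with h | h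
    · have := hx.1 p h
      omega
    · simp [Multiset.eq_of_mem_replicate h]
  parts_sum := by simpa [pairParts] using hx.2.1

theorem mem_onesPairs_of_partition {n k : ℕ} (π : n.Partition) (hk : nonOneParts π = k) :
    (π.parts.filter (· ≠ 1), π.parts.count 1) ∈ onesPairs n k := by
  refine ⟨fun p hp => ?_, ?_, hk⟩
  · have h := Multiset.mem_filter.1 hp
    have := π.parts_pos h.1
    have := h.2
    omega
  · have h := congrArg Multiset.sum (pairParts_filter_count π.parts)
    rw [π.parts_sum] at h
    simpa [pairParts] using h

theorem card_partitions_eq_ncard (n k : ℕ) (P : n.Partition → Prop) [DecidablePred P]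
    (Q : Multiset ℕ × ℕ → Prop)
    (h : ∀ π : n.Partition, P π ↔ Q (π.parts.filter (· ≠ 1), π.parts.count 1)) :
    (Finset.univ.filter (fun π : n.Partition => P π ∧ nonOneParts π = k)).card =
      {x | x ∈ onesPairs n k ∧ Q x}.ncard := by
  rw [← Set.ncard_coe_finset]
  refine Set.ncard_congr (fun π _ => (π.parts.filter (· ≠ 1), π.parts.count 1)) ?_ ?_ ?_
  · intro π hπ
    have hπ' := (Finset.mem_filter.1 (Finset.mem_coe.1 hπ)).2
    exact ⟨mem_onesPairs_of_partition π hπ'.2, (h π).1 hπ'.1⟩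
  · intro π ρ _ _ e
    apply Nat.Partition.ext
    rw [← pairParts_filter_count π.parts, ← pairParts_filter_count ρ.parts]
    exact congrArg pairParts e
  · rintro x ⟨hx, hQ⟩
    have e : ((pairPartition x hx).parts.filter (· ≠ 1), (pairPartition x hx).parts.count 1) = x :=
      Prod.ext (filter_pairParts hx.1) (count_pairParts hx.1)
    refine ⟨pairPartition x hx, ?_, e⟩
    simp only [Finset.coe_filter, Finset.mem_univ, true_and, Set.mem_ofPred_eq]
    refine ⟨(h _).2 (by rwa [e]), ?_⟩
    exact (congrArg (fun y => y.1.card) e).trans hx.2.2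

theorem finite_onesPairs (n k : ℕ) : (onesPairs n k).Finite := by
  refine Set.Finite.of_finite_image (f := pairParts) ?_ ?_
  · refine (Set.finite_range (Nat.Partition.parts : n.Partition → Multiset ℕ)).subset ?_
    rintro _ ⟨x, hx, rfl⟩
    exact ⟨pairPartition x hx, rfl⟩
  · intro x hx y hy e
    refine Prod.ext ?_ ?_
    · rw [← filter_pairParts hx.1, ← filter_pairParts hy.1, e]
    · rw [← count_pairParts hx.1, ← count_pairParts hy.1, e]

theorem ncard_onesPairs_split (n k : ℕ) (Q : Multiset ℕ × ℕ → Prop) :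
    {x | x ∈ onesPairs n k ∧ Q x}.ncard + {x | x ∈ onesPairs n k ∧ ¬ Q x}.ncard =
      (onesPairs n k).ncard := by
  rw [← Set.ncard_union_eq ?_ ((finite_onesPairs n k).subset fun x hx => hx.1)
    ((finite_onesPairs n k).subset fun x hx => hx.1)]
  · congr 1
    ext x
    simp only [Set.mem_union, Set.mem_ofPred_eq]
    tauto
  · rw [Set.disjoint_left]
    rintro x ⟨_, h⟩ ⟨_, h'⟩
    exact h' h

theorem pairwise_sort_append {H L : Multiset ℕ} {a : ℕ} (hH : ∀ p ∈ H, a ≤ p)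
    (hL : ∀ p ∈ L, p ≤ a) :
    (H.sort (· ≥ ·) ++ a :: L.sort (· ≥ ·)).Pairwise (· ≥ ·) := by
  rw [List.pairwise_append, List.pairwise_cons]
  refine ⟨Multiset.pairwise_sort _ _, ⟨fun p hp => hL p ((Multiset.mem_sort _).1 hp),
    Multiset.pairwise_sort _ _⟩, fun p hp q hq => ?_⟩
  have h1 := hH p ((Multiset.mem_sort _).1 hp)
  rcases List.mem_cons.1 hq with rfl | hq
  · exact h1
  · exact (hL q ((Multiset.mem_sort _).1 hq)).trans h1

/-- A multiset splits in only one way around its element of a given rank. -/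
theorem split_unique {H L H' L' : Multiset ℕ} {a a' : ℕ}
    (hH : ∀ p ∈ H, a ≤ p) (hL : ∀ p ∈ L, p ≤ a)
    (hH' : ∀ p ∈ H', a' ≤ p) (hL' : ∀ p ∈ L', p ≤ a')
    (hc : H.card = H'.card) (e : a ::ₘ (H + L) = a' ::ₘ (H' + L')) :
    H = H' ∧ a = a' ∧ L = L' := by
  have key : H.sort (· ≥ ·) ++ a :: L.sort (· ≥ ·) = H'.sort (· ≥ ·) ++ a' :: L'.sort (· ≥ ·) := by
    refine List.Perm.eq_of_pairwise (le := (· ≥ ·)) (fun x y _ _ h1 h2 => le_antisymm h2 h1)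
      (pairwise_sort_append hH hL) (pairwise_sort_append hH' hL') ?_
    rw [← Multiset.coe_eq_coe, ← Multiset.coe_add, ← Multiset.coe_add, ← Multiset.cons_coe,
      ← Multiset.cons_coe]
    simpa using e
  obtain ⟨h1, h2⟩ := List.append_inj key (by simpa using hc)
  obtain ⟨h3, h4⟩ := List.cons.inj h2
  refine ⟨?_, h3, ?_⟩
  · rw [← Multiset.sort_eq H (· ≥ ·), h1, Multiset.sort_eq]
  · rw [← Multiset.sort_eq L (· ≥ ·), h4, Multiset.sort_eq]

theorem exists_split (s : Multiset ℕ) (c : ℕ) (hc : c < s.card) :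
    ∃ H L : Multiset ℕ, ∃ a : ℕ, (∀ p ∈ H, a ≤ p) ∧ (∀ p ∈ L, p ≤ a) ∧ H.card = c ∧
      s = a ::ₘ (H + L) := by
  set l := s.sort (· ≥ ·) with hl
  have hlen : c < l.length := by simpa [hl] using hc
  have e : l.take c ++ l[c] :: l.drop (c + 1) = l := by
    rw [← List.drop_eq_getElem_cons, List.take_append_drop]
  have hp : l.Pairwise (· ≥ ·) := Multiset.pairwise_sort _ _
  rw [← e, List.pairwise_append, List.pairwise_cons] at hp
  refine ⟨l.take c, l.drop (c + 1), l[c], fun p h => ?_, fun p h => ?_, ?_, ?_⟩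
  · exact hp.2.2 p h _ List.mem_cons_self
  · exact hp.2.1.1 p h
  · simp [hlen.le]
  · rw [← Multiset.sort_eq s (· ≥ ·), ← hl, Multiset.coe_add, Multiset.cons_coe,
      Multiset.coe_eq_coe]
    conv_lhs => rw [← e]
    exact List.perm_middle

theorem sum_map_pred_add_card {H : Multiset ℕ} (h : ∀ p ∈ H, 1 ≤ p) :
    (H.map (· - 1)).sum + H.card = H.sum := by
  induction H using Multiset.induction with
  | empty => simp
  | cons a s ih =>
    have h1 := h a (Multiset.mem_cons_self a s)
    have h2 := ih fun p hp => h p (Multiset.mem_cons_of_mem hp)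
    simp only [Multiset.map_cons, Multiset.sum_cons, Multiset.card_cons]
    omega

theorem map_succ_map_pred {H : Multiset ℕ} (h : ∀ p ∈ H, 1 ≤ p) :
    (H.map (· - 1)).map (· + 1) = H := by
  rw [Multiset.map_map]
  conv_rhs => rw [← Multiset.map_id H]
  refine Multiset.map_congr rfl fun p hp => ?_
  have := h p hp
  simp only [Function.comp, id]
  omega

theorem le_card_filter_split {H L : Multiset ℕ} {a b : ℕ} (hH : ∀ p ∈ H, a ≤ p)
    (hL : ∀ p ∈ L, p ≤ a) :
    H.card + 1 ≤ ((a ::ₘ (H + L)).filter (b ≤ ·)).card ↔ b ≤ a := by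
  constructor
  · intro h
    by_contra hb
    rw [Multiset.filter_cons_of_neg _ hb, Multiset.filter_add,
      (Multiset.filter_eq_nil (s := L)).2 (fun p hp hbp => hb (le_trans hbp (hL p hp))),
      add_zero] at h
    exact (Multiset.card_le_card (Multiset.filter_le _ H)).not_gt h
  · intro h
    rw [Multiset.filter_cons_of_pos _ h, Multiset.filter_add,
      (Multiset.filter_eq_self (s := H)).2 (fun p hp => h.trans (hH p hp)), Multiset.card_cons,
      Multiset.card_add]
    omega

theorem ncard_crankPairs_eq (d m k : ℕ) :
    {x | x ∈ onesPairs m k ∧ ¬ x.2 + 1 ≤ (x.1.filter (x.2 + d + 3 ≤ ·)).card}.ncard =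
      (crankPairs d (m + d + 3) (k + 1)).ncard := by
  refine Set.ncard_congr (fun x _ =>
    ((x.2 + d + 2) ::ₘ ((x.1.filter (x.2 + d + 3 ≤ ·)).map (· - 1) +
      x.1.filter (¬ x.2 + d + 3 ≤ ·)), (x.1.filter (x.2 + d + 3 ≤ ·)).card + 1)) ?_ ?_ ?_
  · rintro ⟨s, i⟩ ⟨⟨h2, hs, hk⟩, hi⟩
    simp only at h2 hs hk hi ⊢
    set H := s.filter (i + d + 3 ≤ ·) with hHd
    set L := s.filter (¬ i + d + 3 ≤ ·) with hLd
    have hHL : H + L = s := Multiset.filter_add_not _ s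
    have hH : ∀ p ∈ H, i + d + 3 ≤ p := fun p hp => (Multiset.mem_filter.1 hp).2
    have hL : ∀ p ∈ L, ¬ i + d + 3 ≤ p := fun p hp => (Multiset.mem_filter.1 hp).2
    have hH' : ∀ p ∈ H.map (· - 1), i + d + 2 ≤ p := by
      intro p hp
      obtain ⟨q, hq, rfl⟩ := Multiset.mem_map.1 hp
      have := hH q hq
      omega
    have hsum := sum_map_pred_add_card (H := H) fun p hp => by have := hH p hp; omega
    have e1 : H.sum + L.sum = s.sum := by rw [← hHL, Multiset.sum_add]
    have e2 : H.card + L.card = s.card := by rw [← hHL, Multiset.card_add]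
    refine ⟨⟨?_, ?_, ?_⟩, ?_, ?_⟩
    · intro p hp
      simp only [Multiset.mem_cons, Multiset.mem_add] at hp
      rcases hp with rfl | hp | hp
      · omega
      · have := hH' p hp
        omega
      · exact h2 p (Multiset.mem_filter.1 hp).1
    · simp only [Multiset.sum_cons, Multiset.sum_add]
      omega
    · simp only [Multiset.card_cons, Multiset.card_add, Multiset.card_map]
      omega
    · simp
    · have := (le_card_filter_split (b := H.card + 1 + 1 + d) hH'
        (fun p hp => by have := hL p hp; omega : ∀ p ∈ L, p ≤ i + d + 2)).2 (by omega)
      simpa using this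
  · rintro ⟨s, i⟩ ⟨t, j⟩ - - e
    simp only [Prod.mk.injEq] at e
    obtain ⟨e1, e2⟩ := e
    have key : ∀ (s : Multiset ℕ) (i : ℕ),
        (∀ p ∈ (s.filter (i + d + 3 ≤ ·)).map (· - 1), i + d + 2 ≤ p) ∧
        (∀ p ∈ s.filter (¬ i + d + 3 ≤ ·), p ≤ i + d + 2) ∧
        (((s.filter (i + d + 3 ≤ ·)).map (· - 1)).map (· + 1) = s.filter (i + d + 3 ≤ ·)) := by
      intro s i
      refine ⟨fun p hp => ?_, fun p hp => ?_, map_succ_map_pred fun p hp => ?_⟩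
      · obtain ⟨q, hq, rfl⟩ := Multiset.mem_map.1 hp
        have := (Multiset.mem_filter.1 hq).2
        omega
      · have := (Multiset.mem_filter.1 hp).2
        omega
      · have := (Multiset.mem_filter.1 hp).2
        omega
    obtain ⟨a1, a2, a3⟩ := key s i
    obtain ⟨b1, b2, b3⟩ := key t j
    obtain ⟨f1, f2, f3⟩ := split_unique a1 a2 b1 b2 (by simpa using e2) e1
    refine Prod.ext ?_ (by simp only; omega)
    simp only
    rw [← Multiset.filter_add_not (i + d + 3 ≤ ·) s, ← Multiset.filter_add_not (j + d + 3 ≤ ·) t,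
      f3, ← a3, f1, b3]
  · rintro ⟨t, j⟩ ⟨⟨h2, hs, hk⟩, hj, hc⟩
    simp only at h2 hs hk hj hc
    obtain ⟨c, rfl⟩ : ∃ c, j = c + 1 := ⟨j - 1, by omega⟩
    have hlt : c < t.card := lt_of_lt_of_le hc (Multiset.card_le_card (Multiset.filter_le _ _))
    obtain ⟨H, L, a, hH, hL, rfl, rfl⟩ := exists_split t c hlt
    have ha := (le_card_filter_split hH hL).1 hc
    obtain ⟨i, rfl⟩ : ∃ i, a = i + d + 2 := ⟨a - d - 2, by omega⟩
    have f1 : (H.map (· + 1) + L).filter (i + d + 3 ≤ ·) = H.map (· + 1) := by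
      rw [Multiset.filter_add, Multiset.filter_eq_self.2, Multiset.filter_eq_nil.2, add_zero]
      · intro p hp
        have := hL p hp
        omega
      · intro p hp
        obtain ⟨q, hq, rfl⟩ := Multiset.mem_map.1 hp
        have := hH q hq
        omega
    have f2 : (H.map (· + 1) + L).filter (¬ i + d + 3 ≤ ·) = L := by
      rw [Multiset.filter_add, Multiset.filter_eq_nil.2, Multiset.filter_eq_self.2, zero_add]
      · intro p hp
        have := hL p hp
        omega
      · intro p hp
        obtain ⟨q, hq, rfl⟩ := Multiset.mem_map.1 hp
        have := hH q hq
        omega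
    simp only [Multiset.sum_cons, Multiset.sum_add, Multiset.card_cons, Multiset.card_add] at hs hk
    refine ⟨(H.map (· + 1) + L, i), ⟨⟨?_, ?_, ?_⟩, ?_⟩, ?_⟩
    · intro p hp
      rcases Multiset.mem_add.1 hp with hp | hp
      · obtain ⟨q, hq, rfl⟩ := Multiset.mem_map.1 hp
        have := hH q hq
        omega
      · exact h2 p (by simp [hp])
    · simp only [Multiset.sum_add, Multiset.sum_map_add, Multiset.map_id', Multiset.map_const',
        Multiset.sum_replicate, smul_eq_mul, mul_one]
      omega
    · simp only [Multiset.card_add, Multiset.card_map]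
      omega
    · simp only [f1, Multiset.card_map]
      omega
    · simp only [f1, f2, Multiset.card_map, Multiset.map_map]
      simp

theorem ncard_succ_ones (m k : ℕ) (Q : Multiset ℕ × ℕ → Prop) :
    {x | x ∈ onesPairs m k ∧ Q (x.1, x.2 + 1)}.ncard =
      {x | x ∈ onesPairs (m + 1) k ∧ 1 ≤ x.2 ∧ Q x}.ncard := by
  refine Set.ncard_congr (fun x _ => (x.1, x.2 + 1)) ?_ ?_ ?_
  · rintro ⟨s, i⟩ ⟨⟨h2, hs, hk⟩, hi⟩
    exact ⟨⟨h2, by simp only at hs ⊢; omega, hk⟩, by simp, hi⟩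
  · rintro ⟨s, i⟩ ⟨t, j⟩ - - e
    simpa using e
  · rintro ⟨s, j⟩ ⟨⟨h2, hs, hk⟩, hj, hQ⟩
    simp only at hs hj
    obtain ⟨i, rfl⟩ : ∃ i, j = i + 1 := ⟨j - 1, by omega⟩
    exact ⟨(s, i), ⟨⟨h2, by simp only; omega, hk⟩, hQ⟩, rfl⟩

theorem ncard_crankPairs_add (d m k : ℕ) :
    (crankPairs (d + 1) (m + 1) k).ncard + (crankPairs d (m + d + 3) (k + 1)).ncard =
      (onesPairs m k).ncard := by
  rw [← ncard_crankPairs_eq, crankPairs, ← ncard_succ_ones m k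
      (fun x => x.2 ≤ (x.1.filter (x.2 + 1 + (d + 1) ≤ ·)).card),
    ← ncard_onesPairs_split m k (fun x => x.2 + 1 ≤ (x.1.filter (x.2 + d + 3 ≤ ·)).card)]
  simp only [show ∀ i, i + 1 + 1 + (d + 1) = i + d + 3 by intro i; omega]

theorem ncard_mexPairs_eq (d m k : ℕ) :
    {x | x ∈ onesPairs m k ∧ ¬ Odd (runLength (d + 3) x.1)}.ncard =
      (mexPairs d (m + d + 3) (k + 1)).ncard := by
  have hrun : ∀ s : Multiset ℕ, runLength (d + 3) ((d + 2) ::ₘ s) = runLength (d + 3) s := by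
    intro s
    refine runLength_congr fun p hp => ?_
    rw [Multiset.mem_cons]
    exact or_iff_right (by omega)
  refine Set.ncard_congr (fun x _ => ((d + 2) ::ₘ x.1, x.2 + 1)) ?_ ?_ ?_
  · rintro ⟨s, i⟩ ⟨⟨h2, hs, hk⟩, hi⟩
    simp only at h2 hs hk hi
    refine ⟨⟨?_, ?_, by simp [hk]⟩, by simp, ?_⟩
    · intro p hp
      rcases Multiset.mem_cons.1 hp with rfl | hp
      · omega
      · exact h2 p hp
    · simp only [Multiset.sum_cons]
      omega
    · rw [odd_runLength_iff]
      simpa [hrun] using hi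
  · rintro ⟨s, i⟩ ⟨t, j⟩ - - e
    simpa using e
  · rintro ⟨t, j⟩ ⟨⟨h2, hs, hk⟩, hj, ho⟩
    simp only at h2 hs hk hj ho
    obtain ⟨i, rfl⟩ : ∃ i, j = i + 1 := ⟨j - 1, by omega⟩
    rw [odd_runLength_iff] at ho
    obtain ⟨s, rfl⟩ := Multiset.exists_cons_of_mem ho.1
    simp only [Multiset.sum_cons, Multiset.card_cons] at hs hk
    refine ⟨(s, i), ⟨⟨fun p hp => h2 p (Multiset.mem_cons_of_mem hp), ?_, ?_⟩, ?_⟩, rfl⟩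
    · simp only
      omega
    · simp only
      omega
    · simpa [hrun] using ho.2

theorem ncard_mexPairs_add (d m k : ℕ) :
    (mexPairs (d + 1) (m + 1) k).ncard + (mexPairs d (m + d + 3) (k + 1)).ncard =
      (onesPairs m k).ncard := by
  rw [← ncard_mexPairs_eq, mexPairs, ← ncard_succ_ones m k
      (fun x => Odd (runLength (d + 1 + 2) x.1)),
    ← ncard_onesPairs_split m k (fun x => Odd (runLength (d + 3) x.1))]

theorem le_of_mem_onesPairs {d n k p : ℕ} {x : Multiset ℕ × ℕ} (hx : x ∈ onesPairs n k)
    (hi : 1 ≤ x.2) (hp : p ∈ x.1) (hd : d + 2 ≤ p) : d + 3 ≤ n := by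
  have h1 := Multiset.single_le_sum (fun y _ => Nat.zero_le y) p hp
  have h2 := hx.2.1
  omega

theorem exists_mem_of_mem_crankPairs {d n k : ℕ} {x : Multiset ℕ × ℕ}
    (hx : x ∈ crankPairs d n k) : ∃ p ∈ x.1, d + 2 ≤ p := by
  obtain ⟨_, h1, h2⟩ := hx
  obtain ⟨p, hp⟩ := Multiset.card_pos_iff_exists_mem.1 (h1.trans h2)
  have hp' := Multiset.mem_filter.1 hp
  exact ⟨p, hp'.1, by have := hp'.2; omega⟩

theorem exists_mem_of_mem_mexPairs {d n k : ℕ} {x : Multiset ℕ × ℕ}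
    (hx : x ∈ mexPairs d n k) : ∃ p ∈ x.1, d + 2 ≤ p :=
  ⟨d + 2, ((odd_runLength_iff _ _).1 hx.2.2).1, le_rfl⟩

theorem ncard_crankPairs_eq_ncard_mexPairs (k : ℕ) :
    ∀ d n, (crankPairs d n k).ncard = (mexPairs d n k).ncard := by
  induction k with
  | zero =>
    intro d n
    congr 1
    ext x
    refine iff_of_false (fun hx => ?_) (fun hx => ?_)
    · obtain ⟨p, hp, -⟩ := exists_mem_of_mem_crankPairs hx
      simp [Multiset.card_eq_zero.1 hx.1.2.2] at hp
    · obtain ⟨p, hp, -⟩ := exists_mem_of_mem_mexPairs hx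
      simp [Multiset.card_eq_zero.1 hx.1.2.2] at hp
  | succ k ih =>
    intro d n
    by_cases hn : d + 3 ≤ n
    · obtain ⟨m, rfl⟩ : ∃ m, n = m + d + 3 := ⟨n - d - 3, by omega⟩
      have h1 := ncard_crankPairs_add d m k
      have h2 := ncard_mexPairs_add d m k
      have h3 := ih (d + 1) (m + 1)
      omega
    · congr 1
      ext x
      refine iff_of_false (fun hx => hn ?_) (fun hx => hn ?_)
      · obtain ⟨p, hp, hd⟩ := exists_mem_of_mem_crankPairs hx
        exact le_of_mem_onesPairs hx.1 hx.2.1 hp hd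
      · obtain ⟨p, hp, hd⟩ := exists_mem_of_mem_mexPairs hx
        exact le_of_mem_onesPairs hx.1 hx.2.1 hp hd

theorem ncard_zero_ones_or (n k : ℕ) (Q : Multiset ℕ × ℕ → Prop) :
    {x | x ∈ onesPairs n k ∧ (x.2 = 0 ∨ Q x)}.ncard =
      {x | x ∈ onesPairs n k ∧ x.2 = 0}.ncard +
        {x | x ∈ onesPairs n k ∧ 1 ≤ x.2 ∧ Q x}.ncard := by
  rw [← Set.ncard_union_eq ?_ ((finite_onesPairs n k).subset fun x hx => hx.1)
    ((finite_onesPairs n k).subset fun x hx => hx.1)]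
  · congr 1
    ext x
    simp only [Set.mem_union, Set.mem_ofPred_eq, Nat.one_le_iff_ne_zero]
    tauto
  · rw [Set.disjoint_left]
    rintro x ⟨_, h⟩ ⟨_, h', _⟩
    omega

theorem partitionCrank_nonneg_iff {n : ℕ} (π : n.Partition) :
    0 ≤ partitionCrank π ↔ π.parts.count 1 = 0 ∨
      π.parts.count 1 ≤
        ((π.parts.filter (· ≠ 1)).filter (π.parts.count 1 + 1 + 0 ≤ ·)).card := by
  unfold partitionCrank partitionEta partitionOmega
  split_ifs with h
  · simp [h]
  · have e : (π.parts.filter (· ≠ 1)).filter (π.parts.count 1 + 1 + 0 ≤ ·) =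
        π.parts.filter (π.parts.count 1 < ·) := by
      rw [Multiset.filter_filter]
      refine Multiset.filter_congr fun p _ => ?_
      omega
    rw [e]
    omega

theorem odd_partitionMex_iff {n : ℕ} (π : n.Partition) :
    Odd (partitionMex π) ↔ π.parts.count 1 = 0 ∨
      Odd (runLength (0 + 2) (π.parts.filter (· ≠ 1))) := by
  have e : runLength (0 + 2) (π.parts.filter (· ≠ 1)) = runLength 2 π.parts := by
    refine runLength_congr fun p hp => ?_
    rw [Multiset.mem_filter]
    exact and_iff_left (by omega)
  rw [partitionMex_eq_runLength, Nat.odd_add_one, odd_runLength_iff, e, Multiset.count_eq_zero]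
  tauto

theorem crank_mex_refined (n : ℕ) (hn : 0 < n) (k : ℕ) :
    (Finset.univ.filter
      (fun π : n.Partition => 0 ≤ partitionCrank π ∧ nonOneParts π = k)).card =
    (Finset.univ.filter
      (fun π : n.Partition => Odd (partitionMex π) ∧ nonOneParts π = k)).card := by
  rw [card_partitions_eq_ncard n k _
      (fun x => x.2 = 0 ∨ x.2 ≤ (x.1.filter (x.2 + 1 + 0 ≤ ·)).card) partitionCrank_nonneg_iff,
    card_partitions_eq_ncard n k _
      (fun x => x.2 = 0 ∨ Odd (runLength (0 + 2) x.1)) odd_partitionMex_iff,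
    ncard_zero_ones_or, ncard_zero_ones_or]
  exact congrArg _ (ncard_crankPairs_eq_ncard_mexPairs k 0 n)
end

section
/- For every positive integer n, the number of partitions of n with nonnegative crank is equal to the number of partitions of n with odd mex. -/
/-- The number of elements of `s` exceeding `t`. -/
def countGT (s : Multiset ℕ) (t : ℕ) : ℕ := s.countP (t < ·)

open Classical in
/-- The number of partitions of `n` whose multiset of parts satisfies `P`. -/
noncomputable def numPartitions (P : Multiset ℕ → Prop) (n : ℕ) : ℕ :=
  (Finset.univ.filter (fun π : n.Partition => P π.parts)).card

theorem numPartitions_le_of_rel {P Q : Multiset ℕ → Prop} {n m : ℕ}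
    (R : Multiset ℕ → Multiset ℕ → Prop)
    (hR : ∀ s, 0 ∉ s → s.sum = n → P s → ∃ t, 0 ∉ t ∧ t.sum = m ∧ Q t ∧ R s t)
    (inj : ∀ s s' t, R s t → R s' t → s = s') :
    numPartitions P n ≤ numPartitions Q m := by
  classical
  refine Finset.card_le_card_of_forall_subsingleton (fun π ρ => R π.parts ρ.parts) ?_ ?_
  · intro π hπ
    obtain ⟨t, h0, hsum, hQ, hRt⟩ := hR π.parts (fun h => (π.parts_pos h).ne' rfl) π.parts_sum
      (by simpa using hπ)
    exact ⟨⟨t, fun {i} hi => Nat.pos_of_ne_zero fun h => h0 (h ▸ hi), hsum⟩, by simpa using hQ, hRt⟩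
  · intro ρ _ π hπ π' hπ'
    exact Nat.Partition.ext (inj _ _ _ hπ.2 hπ'.2)

theorem numPartitions_eq_of_rel {P Q : Multiset ℕ → Prop} {n m : ℕ}
    (R : Multiset ℕ → Multiset ℕ → Prop)
    (hl : ∀ s, 0 ∉ s → s.sum = n → P s → ∃ t, 0 ∉ t ∧ t.sum = m ∧ Q t ∧ R s t)
    (hr : ∀ t, 0 ∉ t → t.sum = m → Q t → ∃ s, 0 ∉ s ∧ s.sum = n ∧ P s ∧ R s t)
    (injl : ∀ s s' t, R s t → R s' t → s = s')
    (injr : ∀ s t t', R s t → R s t' → t = t') :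
    numPartitions P n = numPartitions Q m :=
  (numPartitions_le_of_rel R hl injl).antisymm
    (numPartitions_le_of_rel (fun t s => R s t) hr fun t t' s h h' => injr s t t' h h')

theorem numPartitions_add_not (P : Multiset ℕ → Prop) (n : ℕ) :
    numPartitions P n + numPartitions (fun s => ¬ P s) n = Fintype.card n.Partition := by
  classical
  rw [← Finset.card_univ]
  unfold numPartitions
  convert Finset.card_filter_add_card_filter_not (s := Finset.univ)
    (fun π : n.Partition => P π.parts)

theorem numPartitions_eq_zero {P : Multiset ℕ → Prop} {n : ℕ} (h : ∀ s, s.sum = n → ¬ P s) :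
    numPartitions P n = 0 := by
  classical
  exact Finset.card_eq_zero.2 (Finset.filter_eq_empty_iff.2 fun π _ => h _ π.parts_sum)

/-- A relation pairing the multisets violating `P k` with those satisfying `P (k + 1)`,
lowering the sum by `k + 1`. -/
structure StaircasePairing (P : ℕ → Multiset ℕ → Prop)
    (R : ℕ → Multiset ℕ → Multiset ℕ → Prop) : Prop where
  left : ∀ k s, ¬ P k s → ∃ t, R k s t
  right : ∀ k t, P (k + 1) t → ∃ s, R k s t
  left_of_rel : ∀ k s t, R k s t → ¬ P k s
  right_of_rel : ∀ k s t, R k s t → P (k + 1) t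
  left_unique : ∀ k s s' t, R k s t → R k s' t → s = s'
  right_unique : ∀ k s t t', R k s t → R k s t' → t = t'
  sum_eq : ∀ k s t, R k s t → s.sum = t.sum + (k + 1)
  zero_mem_iff : ∀ k s t, R k s t → (0 ∈ s ↔ 0 ∈ t)

namespace StaircasePairing

variable {P Q : ℕ → Multiset ℕ → Prop} {R S : ℕ → Multiset ℕ → Multiset ℕ → Prop}

theorem numPartitions_not_add (h : StaircasePairing P R) (k m : ℕ) :
    numPartitions (fun s => ¬ P k s) (m + (k + 1)) = numPartitions (P (k + 1)) m := by
  refine numPartitions_eq_of_rel (R k) ?_ ?_ (h.left_unique k) (h.right_unique k)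
  · intro s h0 hs hP
    obtain ⟨t, ht⟩ := h.left k s hP
    have := h.sum_eq k s t ht
    exact ⟨t, by rwa [← h.zero_mem_iff k s t ht], by omega, h.right_of_rel k s t ht, ht⟩
  · intro t h0 hs hP
    obtain ⟨s, ht⟩ := h.right k t hP
    have := h.sum_eq k s t ht
    exact ⟨s, by rwa [h.zero_mem_iff k s t ht], by omega, h.left_of_rel k s t ht, ht⟩

theorem numPartitions_not_of_lt (h : StaircasePairing P R) {k n : ℕ} (hn : n < k + 1) :
    numPartitions (fun s => ¬ P k s) n = 0 := by
  refine numPartitions_eq_zero fun s hs hP => ?_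
  obtain ⟨t, ht⟩ := h.left k s hP
  have := h.sum_eq k s t ht
  omega

/-- Inclusion-exclusion along the staircase determines the number of partitions. -/
theorem numPartitions_eq (hP : StaircasePairing P R) (hQ : StaircasePairing Q S) (n k : ℕ) :
    numPartitions (P k) n = numPartitions (Q k) n := by
  induction n using Nat.strong_induction_on generalizing k with
  | _ n ih =>
    have h1 := numPartitions_add_not (P k) n
    have h2 := numPartitions_add_not (Q k) n
    rcases lt_or_ge n (k + 1) with hn | hn
    · rw [hP.numPartitions_not_of_lt hn] at h1
      rw [hQ.numPartitions_not_of_lt hn] at h2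
      omega
    · obtain ⟨m, rfl⟩ := Nat.exists_eq_add_of_le' hn
      rw [hP.numPartitions_not_add] at h1
      rw [hQ.numPartitions_not_add] at h2
      have := ih m (by omega) (k + 1)
      omega

end StaircasePairing

/-- The least integer greater than `k` that is not in `s`. -/
noncomputable def mexFrom (k : ℕ) (s : Multiset ℕ) : ℕ := sInf {i | k < i ∧ i ∉ s}

theorem mexFrom_of_notMem {k : ℕ} {s : Multiset ℕ} (h : k + 1 ∉ s) : mexFrom k s = k + 1 :=
  le_antisymm (Nat.sInf_le ⟨k.lt_succ_self, h⟩)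
    (Nat.sInf_mem (s := {i | k < i ∧ i ∉ s}) ⟨k + 1, k.lt_succ_self, h⟩).1

theorem mexFrom_of_mem {k : ℕ} {s : Multiset ℕ} (h : k + 1 ∈ s) :
    mexFrom k s = mexFrom (k + 1) s := by
  unfold mexFrom
  congr 1
  ext i
  simp only [Set.mem_ofPred_eq, and_congr_left_iff]
  intro hi
  have : i ≠ k + 1 := fun e => hi (e ▸ h)
  omega

theorem mexFrom_cons (k : ℕ) (s : Multiset ℕ) : mexFrom k (k ::ₘ s) = mexFrom k s := by
  unfold mexFrom
  congr 1
  ext i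
  simp only [Set.mem_ofPred_eq, Multiset.mem_cons, not_or, and_congr_right_iff]
  intro hi
  simp [hi.ne']

theorem not_odd_mexFrom_iff (k : ℕ) (s : Multiset ℕ) :
    ¬ Odd (mexFrom k s + k) ↔ k + 1 ∈ s ∧ Odd (mexFrom (k + 1) s + (k + 1)) := by
  by_cases h : k + 1 ∈ s
  · rw [mexFrom_of_mem h, ← add_assoc, Nat.odd_add_one]
    simp [h]
  · rw [mexFrom_of_notMem h]
    simp only [h, false_and, iff_false, not_not]
    exact ⟨k, by ring⟩

theorem staircasePairing_mex :
    StaircasePairing (fun k s => Odd (mexFrom k s + k)) (fun k s t => s = (k + 1) ::ₘ t ∧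
      Odd (mexFrom (k + 1) t + (k + 1))) where
  left k s h := by
    obtain ⟨h1, h2⟩ := (not_odd_mexFrom_iff k s).1 h
    obtain ⟨t, rfl⟩ := Multiset.exists_cons_of_mem h1
    exact ⟨t, rfl, by rwa [mexFrom_cons] at h2⟩
  right k t h := ⟨_, rfl, h⟩
  left_of_rel k s t h := by
    rw [not_odd_mexFrom_iff, h.1, mexFrom_cons]
    exact ⟨Multiset.mem_cons_self _ _, h.2⟩
  right_of_rel k s t h := h.2
  left_unique k s s' t h h' := h.1.trans h'.1.symm
  right_unique k s t t' h h' := (Multiset.cons_inj_right _).1 (h.1.symm.trans h'.1)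
  sum_eq k s t h := by rw [h.1, Multiset.sum_cons, add_comm]
  zero_mem_iff k s t h := by rw [h.1]; simp

theorem countGT_antitone (s : Multiset ℕ) : Antitone (countGT s) := fun a b hab => by
  simp only [countGT, Multiset.countP_eq_card_filter]
  exact Multiset.card_le_card (Multiset.monotone_filter_right s fun x hx => hab.trans_lt hx)

theorem countGT_le_card (s : Multiset ℕ) (t : ℕ) : countGT s t ≤ s.card :=
  Multiset.countP_le_card _ _

theorem countGT_add (s t : Multiset ℕ) (a : ℕ) : countGT (s + t) a = countGT s a + countGT t a :=
  Multiset.countP_add _ _ _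

theorem countGT_of_forall_lt {s : Multiset ℕ} {a : ℕ} (h : ∀ x ∈ s, a < x) :
    countGT s a = s.card := Multiset.countP_eq_card.2 h

theorem countGT_of_forall_le {s : Multiset ℕ} {a : ℕ} (h : ∀ x ∈ s, x ≤ a) :
    countGT s a = 0 := Multiset.countP_eq_zero.2 fun x hx => not_lt.2 (h x hx)

theorem countGT_replicate (n b a : ℕ) :
    countGT (Multiset.replicate n b) a = if a < b then n else 0 := by
  split_ifs with h
  · rw [countGT_of_forall_lt, Multiset.card_replicate]
    intro x hx; rwa [Multiset.eq_of_mem_replicate hx]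
  · refine countGT_of_forall_le fun x hx => ?_
    rw [Multiset.eq_of_mem_replicate hx]; omega

theorem countGT_eq_count_add (s : Multiset ℕ) (a : ℕ) :
    countGT s a = s.count (a + 1) + countGT s (a + 1) := by
  induction s using Multiset.induction_on with
  | empty => simp [countGT]
  | cons b s ih =>
    simp only [countGT, Multiset.countP_cons, Multiset.count_cons] at *
    split_ifs <;> omega

/-- `HasGap k s` says that, listing `s` in decreasing order as `s₁ ≥ s₂ ≥ ⋯`,
no `i` satisfies `sᵢ = i + k`. -/
def HasGap (k : ℕ) (s : Multiset ℕ) : Prop := ∃ d, countGT s (d + k) = d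

theorem hasGap_unique {k d e : ℕ} {s : Multiset ℕ} (hd : countGT s (d + k) = d)
    (he : countGT s (e + k) = e) : d = e := by
  rcases le_total d e with h | h
  · have := countGT_antitone s (Nat.add_le_add_right h k); omega
  · have := countGT_antitone s (Nat.add_le_add_right h k); omega

theorem crossing_unique {k d e : ℕ} {s : Multiset ℕ}
    (hd : d ≤ countGT s (d + k)) (hd' : countGT s (d + 1 + k) ≤ d)
    (he : e ≤ countGT s (e + k)) (he' : countGT s (e + 1 + k) ≤ e) : d = e := by
  rcases lt_trichotomy d e with h | h | h
  · have := countGT_antitone s (show d + 1 + k ≤ e + k by omega); omega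
  · exact h
  · have := countGT_antitone s (show e + 1 + k ≤ d + k by omega); omega

theorem exists_crossing (k : ℕ) (s : Multiset ℕ) :
    ∃ d, d ≤ countGT s (d + k) ∧ countGT s (d + 1 + k) ≤ d := by
  have hex : ∃ D, countGT s (D + 1 + k) ≤ D := ⟨s.card, countGT_le_card _ _⟩
  classical
  refine ⟨Nat.find hex, ?_, Nat.find_spec hex⟩
  rcases h : Nat.find hex with _ | d
  · omega
  · have := Nat.find_min hex (m := d) (by omega)
    omega

theorem not_hasGap_iff (k : ℕ) (s : Multiset ℕ) :
    ¬ HasGap k s ↔ ∃ d, d < countGT s (d + k) ∧ countGT s (d + 1 + k) ≤ d := by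
  constructor
  · intro h
    obtain ⟨d, hd, hd'⟩ := exists_crossing k s
    exact ⟨d, lt_of_le_of_ne hd fun e => h ⟨d, e.symm⟩, hd'⟩
  · rintro ⟨d, hd, hd'⟩ ⟨e, he⟩
    have := countGT_antitone s (show e + k ≤ e + 1 + k by omega)
    have := crossing_unique hd.le hd' he.ge (by omega)
    subst this
    omega

/-- Delete the part `sᵢ = i + k` from `s` and increase the `i - 1` larger parts by one. -/
def DiagonalShift (k : ℕ) (s t : Multiset ℕ) : Prop :=
  ∃ A C : Multiset ℕ, (∀ a ∈ A, A.card + k + 1 ≤ a) ∧ (∀ c ∈ C, c ≤ A.card + k + 1) ∧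
    s = A + (A.card + k + 1) ::ₘ C ∧ t = A.map (· + 1) + C

theorem eq_filter_add_replicate {A C s : Multiset ℕ} {x : ℕ} (hA : ∀ a ∈ A, x ≤ a)
    (hC : ∀ c ∈ C, c ≤ x) (hs : s = A + C) :
    A = s.filter (x < ·) + Multiset.replicate (A.card - countGT s x) x := by
  have h1 : s.filter (x < ·) = A.filter (x < ·) := by
    rw [hs, Multiset.filter_add, Multiset.filter_eq_nil (s := C) |>.2, add_zero]
    exact fun c hc => not_lt.2 (hC c hc)
  have h2 : A.filter (fun a => ¬ x < a) =
      Multiset.replicate (A.filter (fun a => ¬ x < a)).card x :=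
    Multiset.eq_replicate_card.2 fun a ha => by
      rw [Multiset.mem_filter] at ha
      exact le_antisymm (not_lt.1 ha.2) (hA a ha.1)
  have h3 := Multiset.filter_add_not (x < ·) A
  have h4 := congrArg Multiset.card h3
  rw [Multiset.card_add, ← h1, ← Multiset.countP_eq_card_filter] at h4
  rw [show A.card - countGT s x = (A.filter (fun a => ¬ x < a)).card by
    unfold countGT; omega, ← h2, h1, h3]

theorem eq_of_add_eq_add {A C A' C' : Multiset ℕ} {x : ℕ} (hA : ∀ a ∈ A, x ≤ a)
    (hC : ∀ c ∈ C, c ≤ x) (hA' : ∀ a ∈ A', x ≤ a) (hC' : ∀ c ∈ C', c ≤ x)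
    (hcard : A.card = A'.card) (h : A + C = A' + C') : A = A' ∧ C = C' := by
  have : A = A' := by
    rw [eq_filter_add_replicate hA hC rfl, eq_filter_add_replicate hA' hC' rfl, h, hcard]
  subst this
  exact ⟨rfl, add_left_cancel h⟩

theorem exists_add_of_countGT {s : Multiset ℕ} {x d : ℕ} (hd : d ≤ countGT s x)
    (hd' : countGT s (x + 1) ≤ d) :
    ∃ A C : Multiset ℕ, A.card = d ∧ (∀ a ∈ A, x + 1 ≤ a) ∧ (∀ c ∈ C, c ≤ x + 1) ∧ s = A + C := by
  have hcount := countGT_eq_count_add s x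
  refine ⟨s.filter (x + 1 < ·) + Multiset.replicate (d - countGT s (x + 1)) (x + 1),
    s.filter (· < x + 1) + Multiset.replicate (countGT s x - d) (x + 1), ?_, ?_, ?_, ?_⟩
  · rw [Multiset.card_add, Multiset.card_replicate, ← Multiset.countP_eq_card_filter]
    unfold countGT at *; omega
  · intro a ha
    rw [Multiset.mem_add, Multiset.mem_filter, Multiset.mem_replicate] at ha
    omega
  · intro a ha
    rw [Multiset.mem_add, Multiset.mem_filter, Multiset.mem_replicate] at ha
    omega
  · ext a
    simp only [Multiset.count_add, Multiset.count_filter, Multiset.count_replicate]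
    rcases lt_trichotomy a (x + 1) with h | h | h
    · simp [h, h.not_gt, h.ne']
    · subst h; simp; omega
    · simp [h, h.not_gt, h.ne]

namespace DiagonalShift

theorem crossing {k : ℕ} {A C : Multiset ℕ} (hA : ∀ a ∈ A, A.card + k + 1 ≤ a)
    (hC : ∀ c ∈ C, c ≤ A.card + k + 1) :
    A.card < countGT (A + (A.card + k + 1) ::ₘ C) (A.card + k) ∧
      countGT (A + (A.card + k + 1) ::ₘ C) (A.card + 1 + k) ≤ A.card := by
  constructor
  · rw [countGT_add, countGT_of_forall_lt (s := A) fun a ha => by have := hA a ha; omega]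
    simp [countGT]
  · rw [countGT_add, countGT_of_forall_le (s := _ ::ₘ C), add_zero]
    · exact countGT_le_card _ _
    · intro c hc
      rcases Multiset.mem_cons.1 hc with rfl | hc
      · omega
      · have := hC c hc; omega

theorem countGT_right {k : ℕ} {A C : Multiset ℕ} (hA : ∀ a ∈ A, A.card + k + 1 ≤ a)
    (hC : ∀ c ∈ C, c ≤ A.card + k + 1) :
    countGT (A.map (· + 1) + C) (A.card + (k + 1)) = A.card := by
  rw [← add_assoc, countGT_add, countGT_of_forall_le hC, countGT_of_forall_lt, Multiset.card_map,
    add_zero]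
  intro x hx
  obtain ⟨a, ha, rfl⟩ := Multiset.mem_map.1 hx
  have := hA a ha; omega

end DiagonalShift

theorem staircasePairing_hasGap : StaircasePairing HasGap DiagonalShift where
  left k s h := by
    obtain ⟨d, hd, hd'⟩ := (not_hasGap_iff k s).1 h
    obtain ⟨A, C, hcard, hA, hC, hs⟩ := exists_add_of_countGT (s := s) (x := d + k) (d := d)
      (by omega) (by rwa [add_right_comm] at hd')
    have hmem : d + k + 1 ∈ C := by
      by_contra hnot
      have hle : ∀ c ∈ C, c ≤ d + k := fun c hc => by
        have := hC c hc
        have : c ≠ d + k + 1 := fun e => hnot (e ▸ hc)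
        omega
      have := countGT_le_card A (d + k)
      rw [hs, countGT_add, countGT_of_forall_le hle] at hd
      omega
    obtain ⟨C', rfl⟩ := Multiset.exists_cons_of_mem hmem
    subst hcard
    exact ⟨_, A, C', hA, fun c hc => hC c (Multiset.mem_cons_of_mem hc), hs, rfl⟩
  right k t h := by
    obtain ⟨d, hd⟩ := h
    have hcard : ((t.filter (d + (k + 1) < ·)).map (· - 1)).card = d := by
      rw [Multiset.card_map, ← Multiset.countP_eq_card_filter]; exact hd
    refine ⟨_, (t.filter (d + (k + 1) < ·)).map (· - 1), t.filter (fun a => ¬ d + (k + 1) < a),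
      ?_, ?_, rfl, ?_⟩
    · rw [hcard]
      intro x hx
      obtain ⟨a, ha, rfl⟩ := Multiset.mem_map.1 hx
      have := (Multiset.mem_filter.1 ha).2
      omega
    · rw [hcard]
      intro x hx
      have := (Multiset.mem_filter.1 hx).2
      omega
    · rw [Multiset.map_map, Multiset.map_congr rfl (g := id), Multiset.map_id,
        Multiset.filter_add_not]
      intro a ha
      have := (Multiset.mem_filter.1 ha).2
      simp only [Function.comp_apply, id_eq]
      omega
  left_of_rel k s t h := by
    obtain ⟨A, C, hA, hC, rfl, rfl⟩ := h
    exact (not_hasGap_iff _ _).2 ⟨_, DiagonalShift.crossing hA hC⟩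
  right_of_rel k s t h := by
    obtain ⟨A, C, hA, hC, rfl, rfl⟩ := h
    exact ⟨_, DiagonalShift.countGT_right hA hC⟩
  left_unique k s s' t h h' := by
    obtain ⟨A, C, hA, hC, rfl, rfl⟩ := h
    obtain ⟨A', C', hA', hC', rfl, ht⟩ := h'
    have hcard : A.card = A'.card := hasGap_unique (DiagonalShift.countGT_right hA hC)
      (by rw [ht]; exact DiagonalShift.countGT_right hA' hC')
    obtain ⟨h1, h2⟩ := eq_of_add_eq_add (x := A.card + k + 1)
      (by simp only [Multiset.mem_map]; rintro _ ⟨a, ha, rfl⟩; have := hA a ha; omega) hC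
      (by simp only [Multiset.mem_map]; rintro _ ⟨a, ha, rfl⟩; have := hA' a ha; omega)
      (by rwa [hcard]) (by simpa using hcard) ht
    rw [Multiset.map_injective (add_left_injective 1) h1, h2]
  right_unique k s t t' h h' := by
    obtain ⟨A, C, hA, hC, rfl, rfl⟩ := h
    obtain ⟨A', C', hA', hC', hs, rfl⟩ := h'
    have hc := DiagonalShift.crossing hA hC
    have hc' := DiagonalShift.crossing hA' hC'
    rw [← hs] at hc'
    have hcard := crossing_unique hc.1.le hc.2 hc'.1.le hc'.2
    obtain ⟨h1, h2⟩ := eq_of_add_eq_add (x := A.card + k + 1) hA (by simpa using hC)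
      (by rwa [hcard]) (by rw [hcard]; simpa using hC') hcard hs
    rw [h1, (Multiset.cons_inj_right _).1 (h2.trans (by rw [hcard]))]
  sum_eq k s t h := by
    obtain ⟨A, C, hA, hC, rfl, rfl⟩ := h
    simp only [Multiset.sum_add, Multiset.sum_cons, Multiset.sum_map_add, Multiset.map_id',
      Multiset.map_const', Multiset.sum_replicate, smul_eq_mul, mul_one]
    ring
  zero_mem_iff k s t h := by
    obtain ⟨A, C, hA, hC, rfl, rfl⟩ := h
    have : 0 ∉ A := fun h0 => by have := hA 0 h0; omega
    simp [this]

/-- Replace `d + 1` ones by a part `d + 1` as often as possible, where `d` is the number of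
parts exceeding `d`. -/
def CollectOnes (s t : Multiset ℕ) : Prop :=
  ∃ (d v : ℕ) (M : Multiset ℕ), 0 < d ∧ 1 ∉ M ∧ countGT M d = d ∧
    s = M + Multiset.replicate v 1 ∧
    t = M + Multiset.replicate (v / (d + 1)) (d + 1) + Multiset.replicate (v % (d + 1)) 1

theorem countGT_collected {d q r : ℕ} {M : Multiset ℕ} (hd : 0 < d) (hM : countGT M d = d) :
    countGT (M + Multiset.replicate q (d + 1) + Multiset.replicate r 1) d = d + q ∧
    countGT (M + Multiset.replicate q (d + 1) + Multiset.replicate r 1) (d + 1) ≤ d := by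
  have := countGT_antitone M (Nat.le_add_right d 1)
  simp only [countGT_add, countGT_replicate, hM]
  constructor
  · rw [if_pos d.lt_succ_self, if_neg (by omega), add_zero]
  · rw [if_neg (lt_irrefl _), if_neg (by omega)]; omega

theorem eq_add_replicate_count (s : Multiset ℕ) (a : ℕ) :
    ∃ M, a ∉ M ∧ s = M + Multiset.replicate (s.count a) a := by
  refine ⟨s.filter (¬ a = ·), by simp, ?_⟩
  rw [← Multiset.filter_eq s a, add_comm, Multiset.filter_add_not]

theorem exists_collectOnes_right {s : Multiset ℕ} (hs : HasGap 0 s) (h0 : 0 ∉ s)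
    (hpos : 0 < s.sum) : ∃ t, 0 ∉ t ∧ t.sum = s.sum ∧ t.count 1 ≤ countGT t (t.count 1) ∧
      CollectOnes s t := by
  obtain ⟨d, hd⟩ := hs
  rw [add_zero] at hd
  have hd0 : 0 < d := by
    rcases Nat.eq_zero_or_pos d with rfl | h
    · have hzero : ∀ x ∈ s, x = 0 := fun x hx => by
        have := Multiset.countP_eq_zero.1 hd x hx; omega
      rw [Multiset.sum_eq_zero hzero] at hpos
      omega
    · exact h
  obtain ⟨M, h1, hM⟩ := eq_add_replicate_count s 1
  generalize s.count 1 = v at hM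
  subst hM
  have hMd : countGT M d = d := by
    rw [countGT_add, countGT_replicate, if_neg (by omega), add_zero] at hd
    exact hd
  refine ⟨_, ?_, ?_, ?_, d, v, M, hd0, h1, hMd, rfl, rfl⟩
  · simp only [Multiset.mem_add, Multiset.mem_replicate] at h0 ⊢
    grind
  · simp only [Multiset.sum_add, Multiset.sum_replicate, smul_eq_mul, mul_one, add_assoc]
    rw [mul_comm, Nat.div_add_mod]
  · have hcount : (M + Multiset.replicate (v / (d + 1)) (d + 1) +
        Multiset.replicate (v % (d + 1)) 1).count 1 = v % (d + 1) := by
      simp [Multiset.count_replicate, Multiset.count_eq_zero_of_notMem h1, hd0.ne']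
    rw [hcount]
    have hlt : v % (d + 1) < d + 1 := Nat.mod_lt _ d.succ_pos
    have := countGT_antitone (M + Multiset.replicate (v / (d + 1)) (d + 1) +
      Multiset.replicate (v % (d + 1)) 1) (show v % (d + 1) ≤ d by omega)
    rw [(countGT_collected hd0 hMd).1] at this
    exact (Nat.lt_succ_iff.1 hlt).trans ((Nat.le_add_right _ _).trans this)

theorem exists_collectOnes_left {t : Multiset ℕ} (ht : t.count 1 ≤ countGT t (t.count 1))
    (h0 : 0 ∉ t) (hpos : 0 < t.sum) :
    ∃ s, 0 ∉ s ∧ s.sum = t.sum ∧ HasGap 0 s ∧ CollectOnes s t := by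
  obtain ⟨d, hd, hd'⟩ := exists_crossing 0 t
  rw [add_zero] at hd hd'
  have hw : t.count 1 ≤ d := by
    by_contra! h
    have := countGT_antitone t (show d + 1 ≤ t.count 1 by omega)
    omega
  have hd0 : 0 < d := by
    rcases Nat.eq_zero_or_pos d with rfl | h
    · have hzero : ∀ x ∈ t, x = 0 := fun x hx => by
        have h1 := Multiset.countP_eq_zero.1 (Nat.le_zero.1 hd') x hx
        have : x ≠ 1 := fun e => by
          have := Multiset.count_pos.2 (e ▸ hx); omega
        omega
      rw [Multiset.sum_eq_zero hzero] at hpos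
      omega
    · exact h
  have hcount := countGT_eq_count_add t d
  obtain ⟨N, hN⟩ := Multiset.le_iff_exists_add.1
    (Multiset.le_count_iff_replicate_le.1 (show countGT t d - d ≤ t.count (d + 1) by omega))
  obtain ⟨M, h1, hM⟩ := eq_add_replicate_count N 1
  have hN1 : N.count 1 = t.count 1 := by
    conv_rhs => rw [hN]
    simp [Multiset.count_replicate, hd0.ne']
  rw [hN1] at hM
  generalize t.count 1 = w at *
  generalize hq : countGT t d - d = q at *
  have ht' : t = M + Multiset.replicate q (d + 1) + Multiset.replicate w 1 := by
    rw [hN, hM]; abel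
  have hMd : countGT M d = d := by
    have : countGT t d = countGT M d + q := by
      rw [ht']
      simp only [countGT_add, countGT_replicate]
      rw [if_pos d.lt_succ_self, if_neg (by omega), add_zero]
    omega
  have hdiv : ((d + 1) * q + w) / (d + 1) = q := by
    rw [Nat.mul_add_div d.succ_pos, Nat.div_eq_of_lt (by omega), add_zero]
  have hmod : ((d + 1) * q + w) % (d + 1) = w := by
    rw [Nat.mul_add_mod, Nat.mod_eq_of_lt (by omega)]
  refine ⟨M + Multiset.replicate ((d + 1) * q + w) 1, ?_, ?_, ⟨d, ?_⟩,
    d, _, M, hd0, h1, hMd, rfl, by rw [hdiv, hmod, ht']⟩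
  · rw [ht'] at h0
    simp only [Multiset.mem_add, Multiset.mem_replicate] at h0 ⊢
    grind
  · rw [ht']
    simp only [Multiset.sum_add, Multiset.sum_replicate, smul_eq_mul]
    ring
  · rw [add_zero, countGT_add, countGT_replicate, if_neg (by omega), add_zero, hMd]

theorem CollectOnes.left_unique {s s' t : Multiset ℕ} (h : CollectOnes s t)
    (h' : CollectOnes s' t) : s = s' := by
  obtain ⟨d, v, M, hd, h1, hM, rfl, rfl⟩ := h
  obtain ⟨e, u, N, he, h1', hN, rfl, ht⟩ := h'
  have hc := countGT_collected (q := v / (d + 1)) (r := v % (d + 1)) hd hM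
  have hc' := countGT_collected (q := u / (e + 1)) (r := u % (e + 1)) he hN
  rw [← ht] at hc'
  obtain rfl : d = e := crossing_unique (k := 0) (hc.1.symm ▸ Nat.le_add_right _ _) hc.2
    (hc'.1.symm ▸ Nat.le_add_right _ _) hc'.2
  have hdiv : v / (d + 1) = u / (d + 1) := add_left_cancel (hc.1.symm.trans hc'.1)
  have hmod : v % (d + 1) = u % (d + 1) := by
    have := congrArg (Multiset.count 1) ht
    simpa [Multiset.count_replicate, Multiset.count_eq_zero_of_notMem h1,
      Multiset.count_eq_zero_of_notMem h1', hd.ne'] using this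
  have hvu : v = u := by
    rw [← Nat.div_add_mod v (d + 1), ← Nat.div_add_mod u (d + 1), hdiv, hmod]
  subst hvu
  rw [add_right_cancel (add_right_cancel ht)]

theorem CollectOnes.right_unique {s t t' : Multiset ℕ} (h : CollectOnes s t)
    (h' : CollectOnes s t') : t = t' := by
  obtain ⟨d, v, M, hd, h1, hM, rfl, rfl⟩ := h
  obtain ⟨e, u, N, he, h1', hN, hs, rfl⟩ := h'
  have hvu : v = u := by
    have := congrArg (Multiset.count 1) hs
    simpa [Multiset.count_eq_zero_of_notMem h1, Multiset.count_eq_zero_of_notMem h1'] using this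
  subst hvu
  obtain rfl := add_right_cancel hs
  obtain rfl : d = e := hasGap_unique (k := 0) hM hN
  rfl

theorem partitionCrank_nonneg_iff_s1 {n : ℕ} (π : n.Partition) :
    0 ≤ partitionCrank π ↔ π.parts.count 1 ≤ countGT π.parts (π.parts.count 1) := by
  unfold partitionCrank partitionEta partitionOmega countGT
  rw [Multiset.countP_eq_card_filter]
  split_ifs with h
  · simp [h]
  · omega

theorem numPartitions_hasGap_zero {n : ℕ} (hn : 0 < n) :
    numPartitions (HasGap 0) n =
      numPartitions (fun t => t.count 1 ≤ countGT t (t.count 1)) n := by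
  refine numPartitions_eq_of_rel CollectOnes ?_ ?_ (fun _ _ _ => CollectOnes.left_unique)
    (fun _ _ _ => CollectOnes.right_unique)
  · intro s h0 hs hg
    obtain ⟨t, ht0, hts, h⟩ := exists_collectOnes_right hg h0 (hs ▸ hn)
    exact ⟨t, ht0, hts.trans hs, h⟩
  · intro t h0 ht hc
    obtain ⟨s, hs0, hst, h⟩ := exists_collectOnes_left hc h0 (ht ▸ hn)
    exact ⟨s, hs0, hst.trans ht, h⟩

theorem crank_mex (n : ℕ) (hn : 0 < n) :
    (Finset.univ.filter (fun π : n.Partition => 0 ≤ partitionCrank π)).card =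
    (Finset.univ.filter (fun π : n.Partition => Odd (partitionMex π))).card := by
  have h := staircasePairing_hasGap.numPartitions_eq staircasePairing_mex n 0
  rw [numPartitions_hasGap_zero hn] at h
  unfold numPartitions at h
  simp only [partitionCrank_nonneg_iff_s1]
  convert h
  rfl
end
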